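/- Bernstein-type inequality for the Dirichlet process posterior mean (conditional form via Bayesian bootstrap weights): Let n ≥ 1, fix ε ∈ (0,1) and γ ≥ c₀·ε^{−2} + 1, and let g_0, g_1, …, g_{n+1} ∈ [0,1] with g_0 = 0 and g_{n+1} = 1. Let w ∼ Dir(γ, 1, …, 1, γ) be a Dirichlet random vector on Δ_{n+1} (parameter γ in positions 0 and n+1, and 1 in the n middle positions), and set W = Σ_{i=0}^{n+1} w_i g_i, ĝ = (1/n) Σ_{i=1}^n g_i, and V̂ = (1/n) Σ_{i=1}^n g_i² − ĝ². Then for every δ ∈ (0,1), P( W − ĝ ≥ √( 4 V̂ · log((1+ε)/δ) / (n + 2γ − 1) ) + (4 log((1+ε)/δ) + 5γ)/(n + 2γ − 1) ) ≤ δ. -/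

import Mathlib

open MeasureTheory ProbabilityTheory Real Set
open scoped ENNReal

noncomputable section

/-- The absolute constant `c₀ = (2/π)(8 + 49√6/9)²`. -/
def c0 : ℝ := (2 / Real.pi) * (8 + 49 * Real.sqrt 6 / 9) ^ 2

/-- Unnormalized density of `Dir(α)` in the first `m` coordinates. -/
def dirichletDensity (m : ℕ) (α : Fin (m + 1) → ℝ) : (Fin m → ℝ) → ℝ :=
  Set.indicator {x | (∀ i, 0 ≤ x i) ∧ ∑ i, x i ≤ 1}
    (fun x => (∏ i : Fin m, x i ^ (α i.castSucc - 1)) * (1 - ∑ i, x i) ^ (α (Fin.last m) - 1))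

def dirichletBase (m : ℕ) (α : Fin (m + 1) → ℝ) : Measure (Fin m → ℝ) :=
  volume.withDensity fun x => ENNReal.ofReal (dirichletDensity m α x)

/-- The Dirichlet distribution `Dir(α)`, as the law of the vector
`(x₀, …, x_{m-1}, 1 - ∑ x_i)` on the simplex `Δ_m ⊆ ℝ^{m+1}`. -/
def dirichlet (m : ℕ) (α : Fin (m + 1) → ℝ) : Measure (Fin (m + 1) → ℝ) :=
  Measure.map (fun x : Fin m → ℝ => Fin.snoc x (1 - ∑ i, x i))
    ((dirichletBase m α Set.univ)⁻¹ • dirichletBase m α)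

/-- Kullback–Leibler divergence between finitely supported `p, q` (for `p ≪ q`). -/
def klReal {m : ℕ} (p q : Fin (m + 1) → ℝ) : ℝ :=
  ∑ i, if p i = 0 then 0 else p i * Real.log (p i / q i)

/-- `Kinf(p, μ, f) = inf { KL(p,q) : q ∈ Δ_m, qf ≥ μ }`. -/
def Kinf {m : ℕ} (p : Fin (m + 1) → ℝ) (μ : ℝ) (f : Fin (m + 1) → ℝ) : ℝ :=
  sInf {x | ∃ q ∈ stdSimplex ℝ (Fin (m + 1)),
    (∀ i, q i = 0 → p i = 0) ∧ μ ≤ ∑ i, f i * q i ∧ x = klReal p q}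

/-- `Kinf*(p, μ, f) = inf { KL(p,q) : q ∈ Δ_m, qf = μ }`. -/
def Kinfstar {m : ℕ} (p : Fin (m + 1) → ℝ) (μ : ℝ) (f : Fin (m + 1) → ℝ) : ℝ :=
  sInf {x | ∃ q ∈ stdSimplex ℝ (Fin (m + 1)),
    (∀ i, q i = 0 → p i = 0) ∧ (∑ i, f i * q i) = μ ∧ x = klReal p q}

/-- `A(p, μ, f) = sgn(μ - pf) √(2 Kinf*(p, μ, f))`. -/
def Afun {m : ℕ} (p : Fin (m + 1) → ℝ) (μ : ℝ) (f : Fin (m + 1) → ℝ) : ℝ :=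
  Real.sign (μ - ∑ ℓ, f ℓ * p ℓ) * Real.sqrt (2 * Kinfstar p μ f)

/-!
Normalizing independent `Gamma(αᵢ, bᵢ)` variables gives the Markov–Krein identity
`E (∑ bᵢ wᵢ) ^ (-∑ αᵢ) = ∏ bᵢ ^ (-αᵢ)` for `w ∼ Dir(α)` and positive `b`. With `bᵢ = 1 - λ fᵢ` and
`1 - λ t ≤ exp (-λ t)`, Markov's inequality turns it into a Chernoff bound for `∑ wᵢ fᵢ`, and
`-log (1 - x) ≤ x + x² / (2 (1 - λ))` for `x ≤ λ` makes the exponent sub-gamma, whence a Bernstein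
inequality for every Dirichlet distribution and every `f ≤ 1`.

For `f = g - ĝ` and `α = (γ, 1, …, 1, γ)` the middle coordinates contribute nothing to `∑ αᵢ fᵢ` and
`n V̂` to `∑ αᵢ fᵢ²`; the two atoms of mass `γ` add at most `2 γ` to each, which the
term `5 γ` of the threshold absorbs.
-/

section PiFin

@[fun_prop]
theorem measurable_fin_snoc {Ω E : Type*} [MeasurableSpace Ω] [MeasurableSpace E] {m : ℕ}
    {f : Ω → Fin m → E} {g : Ω → E} (hf : Measurable f) (hg : Measurable g) :
    Measurable fun ω => (Fin.snoc (f ω) (g ω) : Fin (m + 1) → E) := by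
  refine measurable_pi_lambda _ (Fin.lastCases ?_ fun i => ?_)
  · simpa only [Fin.snoc_last] using hg
  · simpa only [Fin.snoc_castSucc] using measurable_pi_iff.mp hf i

variable {E : Type*} [MeasureSpace E] [SigmaFinite (volume : Measure E)] {m : ℕ}

theorem lintegral_eq_lintegral_lintegral_snoc {F : (Fin (m + 1) → E) → ℝ≥0∞} (hF : Measurable F) :
    ∫⁻ y, F y = ∫⁻ t, ∫⁻ z : Fin m → E, F (Fin.snoc z t) := by
  have hpres := (volume_preserving_piFinSuccAbove (fun _ : Fin (m + 1) => E) (Fin.last m)).symm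
  rw [hpres.lintegral_map_equiv F, Measure.volume_eq_prod, lintegral_prod _ (by fun_prop)]
  exact lintegral_congr fun t => lintegral_congr fun z => congrArg F (Fin.insertNth_last' t z)

theorem lintegral_prod_apply_eq_prod_lintegral {f : Fin m → E → ℝ≥0∞}
    (hf : ∀ i, Measurable (f i)) :
    ∫⁻ y : Fin m → E, ∏ i, f i (y i) = ∏ i, ∫⁻ t, f i t := by
  induction m with
  | zero => simp [volume_pi]
  | succ m ih =>
    have hprod : Measurable fun z : Fin m → E => ∏ i, f i.castSucc (z i) :=
      Finset.measurable_fun_prod _ fun i _ => (hf _).comp (measurable_pi_apply i)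
    rw [lintegral_eq_lintegral_lintegral_snoc (F := fun y => ∏ i, f i (y i))
      (Finset.measurable_fun_prod _ fun i _ => (hf i).comp (measurable_pi_apply i))]
    simp only [Fin.prod_univ_castSucc, Fin.snoc_castSucc, Fin.snoc_last]
    simp_rw [lintegral_mul_const _ hprod, lintegral_const_mul _ (hf (Fin.last m)),
      ih fun i => hf i.castSucc]

end PiFin

theorem lintegral_eq_mul_lintegral_smul {m : ℕ} (G : (Fin m → ℝ) → ℝ≥0∞) {s : ℝ} (hs : s ≠ 0) :
    ∫⁻ y, G y = ENNReal.ofReal (|s| ^ m) * ∫⁻ x : Fin m → ℝ, G (s • x) := by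
  have hmap := lintegral_map_equiv (μ := volume) G (MeasurableEquiv.smul₀ s hs)
  rw [MeasurableEquiv.coe_smul₀, Measure.map_addHaar_smul volume hs, lintegral_smul_measure,
    Module.finrank_fin_fun, smul_eq_mul] at hmap
  rw [← hmap, ← mul_assoc, ← ENNReal.ofReal_mul (by positivity), abs_inv, abs_pow,
    mul_inv_cancel₀ (by positivity), ENNReal.ofReal_one, one_mul]

/-- The parametrization `x ↦ (x₀, …, x_{m-1}, 1 - ∑ xᵢ)` of the hyperplane `∑ wᵢ = 1`, along which
the Dirichlet distribution is transported. -/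
def simplexChart {m : ℕ} (x : Fin m → ℝ) : Fin (m + 1) → ℝ :=
  Fin.snoc x (1 - ∑ i, x i)

section SimplexChart

variable {m : ℕ}

@[simp]
theorem simplexChart_castSucc (x : Fin m → ℝ) (i : Fin m) : simplexChart x i.castSucc = x i :=
  Fin.snoc_castSucc ..

@[simp]
theorem simplexChart_last (x : Fin m → ℝ) : simplexChart x (Fin.last m) = 1 - ∑ i, x i :=
  Fin.snoc_last ..

theorem sum_simplexChart (x : Fin m → ℝ) : ∑ i, simplexChart x i = 1 := by
  simp [Fin.sum_univ_castSucc]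

theorem simplexChart_mem_stdSimplex_iff {x : Fin m → ℝ} :
    simplexChart x ∈ stdSimplex ℝ (Fin (m + 1)) ↔ (∀ i, 0 ≤ x i) ∧ ∑ i, x i ≤ 1 := by
  simp [stdSimplex, sum_simplexChart, Fin.forall_fin_succ']

@[fun_prop]
theorem measurable_simplexChart :
    Measurable (simplexChart : (Fin m → ℝ) → Fin (m + 1) → ℝ) := by
  unfold simplexChart
  fun_prop

theorem snoc_smul_sub_sum (s : ℝ) (x : Fin m → ℝ) :
    (Fin.snoc (s • x) (s - ∑ i, (s • x) i) : Fin (m + 1) → ℝ) = s • simplexChart x := by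
  ext i
  refine Fin.lastCases ?_ (fun j => ?_) i
  · simp [mul_sub, Finset.mul_sum]
  · simp

-- The coordinates are `s = ∑ yᵢ` and `x = s⁻¹ • (y₀, …, y_{m-1})`; their Jacobian is `|s| ^ m`.
theorem lintegral_eq_lintegral_smul_simplexChart {F : (Fin (m + 1) → ℝ) → ℝ≥0∞}
    (hF : Measurable F) :
    ∫⁻ y, F y = ∫⁻ x : Fin m → ℝ, ∫⁻ s, ENNReal.ofReal (|s| ^ m) * F (s • simplexChart x) := by
  calc ∫⁻ y, F y
      = ∫⁻ z : Fin m → ℝ, ∫⁻ t, F (Fin.snoc z t) := by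
        rw [lintegral_eq_lintegral_lintegral_snoc hF]
        exact lintegral_lintegral_swap (by fun_prop)
    _ = ∫⁻ z : Fin m → ℝ, ∫⁻ s, F (Fin.snoc z (s - ∑ i, z i)) :=
        lintegral_congr fun z =>
          (lintegral_sub_right_eq_self (fun t => F (Fin.snoc z t)) (∑ i, z i)).symm
    _ = ∫⁻ s, ∫⁻ z : Fin m → ℝ, F (Fin.snoc z (s - ∑ i, z i)) :=
        lintegral_lintegral_swap (by fun_prop)
    _ = ∫⁻ s, ∫⁻ x : Fin m → ℝ, ENNReal.ofReal (|s| ^ m) * F (s • simplexChart x) := by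
        refine lintegral_congr_ae ?_
        filter_upwards [Measure.ae_ne volume (0 : ℝ)] with s hs
        rw [lintegral_eq_mul_lintegral_smul _ hs, lintegral_const_mul _ (by fun_prop)]
        simp only [snoc_smul_sub_sum]
    _ = ∫⁻ x : Fin m → ℝ, ∫⁻ s, ENNReal.ofReal (|s| ^ m) * F (s • simplexChart x) :=
        lintegral_lintegral_swap (by fun_prop)

end SimplexChart

theorem exists_pos_of_sum_eq_one {ι : Type*} [Fintype ι] {w : ι → ℝ} (hw : ∑ i, w i = 1) :
    ∃ i, 0 < w i := by
  by_contra! h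
  linarith [Finset.sum_nonpos fun i (_ : i ∈ Finset.univ) => h i]

theorem sum_mul_pos_of_mem_stdSimplex {ι : Type*} [Fintype ι] {b w : ι → ℝ} (hb : ∀ i, 0 < b i)
    (hw : w ∈ stdSimplex ℝ ι) : 0 < ∑ i, b i * w i := by
  obtain ⟨i, hi⟩ := exists_pos_of_sum_eq_one hw.2
  exact Finset.sum_pos' (fun j _ => mul_nonneg (hb j).le (hw.1 j))
    ⟨i, Finset.mem_univ i, mul_pos (hb i) hi⟩

section GammaRepresentation

variable {m : ℕ}

theorem dirichletDensity_eq_indicator (α : Fin (m + 1) → ℝ) (x : Fin m → ℝ) :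
    dirichletDensity m α x =
      (stdSimplex ℝ (Fin (m + 1))).indicator (fun w => ∏ i, w i ^ (α i - 1)) (simplexChart x) := by
  classical
  simp only [dirichletDensity, Set.indicator_apply, Set.mem_ofPred_eq,
    simplexChart_mem_stdSimplex_iff, Fin.prod_univ_castSucc, simplexChart_castSucc,
    simplexChart_last]

theorem dirichletDensity_nonneg (α : Fin (m + 1) → ℝ) (x : Fin m → ℝ) :
    0 ≤ dirichletDensity m α x := by
  rw [dirichletDensity_eq_indicator]
  exact Set.indicator_nonneg
    (fun w hw => Finset.prod_nonneg fun i _ => rpow_nonneg (hw.1 i) _) _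

@[fun_prop]
theorem measurable_dirichletDensity (α : Fin (m + 1) → ℝ) :
    Measurable (dirichletDensity m α) := by
  simp_rw [funext (dirichletDensity_eq_indicator α)]
  exact (Measurable.indicator (by fun_prop) (isClosed_stdSimplex ℝ _).measurableSet).comp
    measurable_simplexChart

/-- The multivariate beta function `B(α) = ∏ Γ(αᵢ) / Γ(∑ αᵢ)`, the total mass of the unnormalized
Dirichlet density. -/
def multivariateBeta (α : Fin (m + 1) → ℝ) : ℝ :=
  (∏ i, Gamma (α i)) / Gamma (∑ i, α i)

variable {α b : Fin (m + 1) → ℝ}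

theorem multivariateBeta_pos (hα : ∀ i, 0 < α i) : 0 < multivariateBeta α :=
  div_pos (Finset.prod_pos fun i _ => Gamma_pos_of_pos (hα i))
    (Gamma_pos_of_pos (Finset.sum_pos (fun i _ => hα i) Finset.univ_nonempty))

theorem pow_mul_prod_gammaPDFReal_smul (hα : ∀ i, 0 < α i) (hb : ∀ i, 0 < b i)
    {w : Fin (m + 1) → ℝ} (hw : w ∈ stdSimplex ℝ (Fin (m + 1))) {s : ℝ} (hs : 0 < s) :
    s ^ m * ∏ i, gammaPDFReal (α i) (b i) (s * w i) =
      (multivariateBeta α)⁻¹ * (∏ i, b i ^ α i) *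
        ((∏ i, w i ^ (α i - 1)) * (∑ i, b i * w i) ^ (-∑ i, α i)) *
        gammaPDFReal (∑ i, α i) (∑ i, b i * w i) s := by
  have hβ := sum_mul_pos_of_mem_stdSimplex hb hw
  have hΓ : Gamma (∑ i, α i) ≠ 0 :=
    (Gamma_pos_of_pos (Finset.sum_pos (fun i _ => hα i) Finset.univ_nonempty)).ne'
  have hpdf : ∀ i, gammaPDFReal (α i) (b i) (s * w i) =
      b i ^ α i / Gamma (α i) * (s ^ (α i - 1) * w i ^ (α i - 1)) * exp (-(b i * (s * w i))) :=
    fun i => by rw [gammaPDFReal, if_pos (mul_nonneg hs.le (hw.1 i)), mul_rpow hs.le (hw.1 i)]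
  have hexp : ∏ i, exp (-(b i * (s * w i))) = exp (-((∑ i, b i * w i) * s)) := by
    rw [← exp_sum, Finset.sum_neg_distrib, Finset.sum_mul]
    congr 2
    exact Finset.sum_congr rfl fun i _ => by ring
  have hpow : s ^ m * ∏ i, s ^ (α i - 1) = s ^ (∑ i, α i - 1) := by
    rw [← rpow_sum_of_pos hs, ← rpow_natCast, ← rpow_add hs]
    congr 1
    simp only [Finset.sum_sub_distrib, Finset.sum_const, Finset.card_univ, Fintype.card_fin,
      nsmul_eq_mul]
    push_cast
    ring
  simp_rw [hpdf, Finset.prod_mul_distrib, Finset.prod_div_distrib, hexp, gammaPDFReal, if_pos hs.le,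
    rpow_neg hβ.le, ← hpow, multivariateBeta]
  field_simp

@[fun_prop]
theorem measurable_gammaPDF (a r : ℝ) : Measurable (gammaPDF a r) :=
  (measurable_gammaPDFReal a r).ennreal_ofReal

theorem prod_gammaPDF_eq_zero {y : Fin (m + 1) → ℝ} (hy : ∃ i, y i < 0) :
    ∏ i, gammaPDF (α i) (b i) (y i) = 0 := by
  obtain ⟨i, hi⟩ := hy
  exact Finset.prod_eq_zero (Finset.mem_univ i) (gammaPDF_of_neg hi)

-- If `Y i ∼ Gamma(α i, b i)` are independent, the left side is the joint density of
-- `x = Y / ∑ Yᵢ` and `s = ∑ Yᵢ`.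
theorem pow_mul_prod_gammaPDF_smul_simplexChart (hα : ∀ i, 0 < α i) (hb : ∀ i, 0 < b i)
    (x : Fin m → ℝ) {s : ℝ} (hs : s ≠ 0) :
    ENNReal.ofReal (|s| ^ m) * ∏ i, gammaPDF (α i) (b i) ((s • simplexChart x) i) =
      ENNReal.ofReal ((multivariateBeta α)⁻¹ * ∏ i, b i ^ α i) *
        ENNReal.ofReal (dirichletDensity m α x * (∑ i, b i * simplexChart x i) ^ (-∑ i, α i)) *
        gammaPDF (∑ i, α i) (∑ i, b i * simplexChart x i) s := by
  obtain hneg | hpos := hs.lt_or_gt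
  · obtain ⟨i, hi⟩ := exists_pos_of_sum_eq_one (sum_simplexChart x)
    rw [prod_gammaPDF_eq_zero ⟨i, mul_neg_of_neg_of_pos hneg hi⟩, gammaPDF_of_neg hneg, mul_zero,
      mul_zero]
  by_cases hx : simplexChart x ∈ stdSimplex ℝ (Fin (m + 1))
  · have hK : 0 ≤ (multivariateBeta α)⁻¹ * ∏ i, b i ^ α i :=
      mul_nonneg (inv_nonneg.mpr (multivariateBeta_pos hα).le)
        (Finset.prod_nonneg fun i _ => rpow_nonneg (hb i).le _)
    have hD := mul_nonneg (dirichletDensity_nonneg α x)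
      (rpow_nonneg (sum_mul_pos_of_mem_stdSimplex hb hx).le (-∑ i, α i))
    simp only [gammaPDF, Pi.smul_apply, smul_eq_mul, abs_of_pos hpos]
    rw [← ENNReal.ofReal_prod_of_nonneg fun i _ => gammaPDFReal_nonneg (hα i) (hb i) _,
      ← ENNReal.ofReal_mul (by positivity), ← ENNReal.ofReal_mul hK,
      ← ENNReal.ofReal_mul (mul_nonneg hK hD), pow_mul_prod_gammaPDFReal_smul hα hb hx hpos,
      dirichletDensity_eq_indicator, Set.indicator_of_mem hx]
  · obtain ⟨i, hi⟩ : ∃ i, simplexChart x i < 0 := by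
      by_contra! h
      exact hx ⟨h, sum_simplexChart x⟩
    rw [prod_gammaPDF_eq_zero ⟨i, mul_neg_of_pos_of_neg hpos hi⟩, dirichletDensity_eq_indicator,
      Set.indicator_of_notMem hx, zero_mul, ENNReal.ofReal_zero, mul_zero, mul_zero, zero_mul]

theorem lintegral_pow_mul_prod_gammaPDF_smul_simplexChart (hα : ∀ i, 0 < α i) (hb : ∀ i, 0 < b i)
    (x : Fin m → ℝ) :
    ∫⁻ s, ENNReal.ofReal (|s| ^ m) * ∏ i, gammaPDF (α i) (b i) ((s • simplexChart x) i) =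
      ENNReal.ofReal ((multivariateBeta α)⁻¹ * ∏ i, b i ^ α i) *
        ENNReal.ofReal
          (dirichletDensity m α x * (∑ i, b i * simplexChart x i) ^ (-∑ i, α i)) := by
  rw [lintegral_congr_ae ((Measure.ae_ne volume (0 : ℝ)).mono fun s hs =>
    pow_mul_prod_gammaPDF_smul_simplexChart hα hb x hs)]
  by_cases hx : simplexChart x ∈ stdSimplex ℝ (Fin (m + 1))
  · rw [lintegral_const_mul _ (measurable_gammaPDF _ _), lintegral_gammaPDF_eq_one
      (Finset.sum_pos (fun i _ => hα i) Finset.univ_nonempty)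
      (sum_mul_pos_of_mem_stdSimplex hb hx), mul_one]
  · simp [dirichletDensity_eq_indicator, Set.indicator_of_notMem hx]

theorem lintegral_dirichletDensity_mul_rpow (hα : ∀ i, 0 < α i) (hb : ∀ i, 0 < b i) :
    ∫⁻ x, ENNReal.ofReal (dirichletDensity m α x *
        (∑ i, b i * simplexChart x i) ^ (-∑ i, α i)) =
      ENNReal.ofReal (multivariateBeta α * ∏ i, b i ^ (-α i)) := by
  set K := (multivariateBeta α)⁻¹ * ∏ i, b i ^ α i with hK
  have hKpos : 0 < K := mul_pos (inv_pos.mpr (multivariateBeta_pos hα))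
    (Finset.prod_pos fun i _ => rpow_pos_of_pos (hb i) _)
  have hKinv : multivariateBeta α * ∏ i, b i ^ (-α i) = K⁻¹ := by
    simp_rw [rpow_neg (hb _).le, Finset.prod_inv_distrib, hK, mul_inv, inv_inv]
  have hgamma : Measurable fun y : Fin (m + 1) → ℝ => ∏ i, gammaPDF (α i) (b i) (y i) := by
    fun_prop
  have htotal : ∫⁻ y : Fin (m + 1) → ℝ, ∏ i, gammaPDF (α i) (b i) (y i) = 1 := by
    rw [lintegral_prod_apply_eq_prod_lintegral fun i => measurable_gammaPDF _ _]
    exact Finset.prod_eq_one fun i _ => lintegral_gammaPDF_eq_one (hα i) (hb i)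
  rw [lintegral_eq_lintegral_smul_simplexChart hgamma,
    lintegral_congr (lintegral_pow_mul_prod_gammaPDF_smul_simplexChart hα hb),
    lintegral_const_mul _ (by fun_prop), mul_comm] at htotal
  rw [hKinv, ENNReal.ofReal_inv_of_pos hKpos]
  exact ENNReal.eq_inv_of_mul_eq_one_left htotal

end GammaRepresentation

section Dirichlet

variable {m : ℕ} {α b : Fin (m + 1) → ℝ}

theorem dirichletBase_univ (hα : ∀ i, 0 < α i) :
    dirichletBase m α Set.univ = ENNReal.ofReal (multivariateBeta α) := by
  simpa [dirichletBase, sum_simplexChart] using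
    lintegral_dirichletDensity_mul_rpow hα fun _ => one_pos

theorem ae_dirichlet_mem_stdSimplex : ∀ᵐ w ∂dirichlet m α, w ∈ stdSimplex ℝ (Fin (m + 1)) := by
  refine (ae_map_iff measurable_simplexChart.aemeasurable
    (isClosed_stdSimplex ℝ _).measurableSet).mpr (Measure.ae_smul_measure ?_ _)
  rw [dirichletBase, ae_withDensity_iff (by fun_prop)]
  refine ae_of_all _ fun x hx => ?_
  by_contra (h : simplexChart x ∉ stdSimplex ℝ (Fin (m + 1)))
  exact hx (by rw [dirichletDensity_eq_indicator, Set.indicator_of_notMem h, ENNReal.ofReal_zero])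

theorem lintegral_dirichlet_sum_mul_rpow (hα : ∀ i, 0 < α i) (hb : ∀ i, 0 < b i) :
    ∫⁻ w, ENNReal.ofReal ((∑ i, b i * w i) ^ (-∑ i, α i)) ∂dirichlet m α =
      ENNReal.ofReal (∏ i, b i ^ (-α i)) := by
  have hB := multivariateBeta_pos hα
  have hmap : dirichlet m α =
    ((dirichletBase m α Set.univ)⁻¹ • dirichletBase m α).map simplexChart := rfl
  rw [hmap, lintegral_map (by fun_prop) measurable_simplexChart, lintegral_smul_measure,
    dirichletBase_univ hα, dirichletBase,
    lintegral_withDensity_eq_lintegral_mul _ (by fun_prop) (by fun_prop)]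
  simp only [Pi.mul_apply, ← ENNReal.ofReal_mul (dirichletDensity_nonneg α _)]
  rw [lintegral_dirichletDensity_mul_rpow hα hb, smul_eq_mul, ENNReal.ofReal_mul hB.le, ← mul_assoc,
    ENNReal.inv_mul_cancel (by simpa using hB) ENNReal.ofReal_ne_top, one_mul]

theorem dirichlet_sum_mul_le_le (hα : ∀ i, 0 < α i) (hb : ∀ i, 0 < b i) {r : ℝ} (hr : 0 < r) :
    dirichlet m α {w | ∑ i, b i * w i ≤ r} ≤
      ENNReal.ofReal (r ^ (∑ i, α i) * ∏ i, b i ^ (-α i)) := by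
  have hA : 0 < ∑ i, α i := Finset.sum_pos (fun i _ => hα i) Finset.univ_nonempty
  set f : (Fin (m + 1) → ℝ) → ℝ≥0∞ := fun w => ENNReal.ofReal ((∑ i, b i * w i) ^ (-∑ i, α i))
  set c := ENNReal.ofReal (r ^ (-∑ i, α i))
  have hc : c ≠ 0 := by simpa [c] using rpow_pos_of_pos hr _
  have hsubset : dirichlet m α {w | ∑ i, b i * w i ≤ r} ≤ dirichlet m α {w | c ≤ f w} := by
    refine measure_mono_ae ?_
    filter_upwards [ae_dirichlet_mem_stdSimplex] with w hw hle
    exact ENNReal.ofReal_le_ofReal (rpow_le_rpow_of_nonpos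
      (sum_mul_pos_of_mem_stdSimplex hb hw) hle (neg_nonpos.mpr hA.le))
  have hmarkov : c * dirichlet m α {w | c ≤ f w} ≤ ENNReal.ofReal (∏ i, b i ^ (-α i)) :=
    (mul_meas_ge_le_lintegral (by fun_prop) c).trans_eq (lintegral_dirichlet_sum_mul_rpow hα hb)
  have hcinv : c⁻¹ = ENNReal.ofReal (r ^ (∑ i, α i)) := by
    rw [← ENNReal.ofReal_inv_of_pos (rpow_pos_of_pos hr _), rpow_neg hr.le, inv_inv]
  rw [ENNReal.ofReal_mul (rpow_nonneg hr.le _), ← hcinv]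
  exact hsubset.trans ((ENNReal.mul_le_iff_le_inv hc ENNReal.ofReal_ne_top).mp hmarkov)

end Dirichlet

section SubGamma

theorem neg_log_one_sub_le {x lam : ℝ} (hx : x ≤ lam) (h0 : 0 ≤ lam) (h1 : lam < 1) :
    -log (1 - x) ≤ x + x ^ 2 / (2 * (1 - lam)) := by
  have hy : 0 < 1 - x := by linarith
  have : 0 < 1 - lam := by linarith
  obtain hneg | hpos := lt_or_ge x 0
  · have hlog := le_log_one_add_of_nonneg (neg_nonneg.mpr hneg.le)
    have hfrac : x + x ^ 2 / 2 ≥ -(2 * -x / (-x + 2)) := by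
      rw [ge_iff_le, ← neg_div, div_le_iff₀ (by linarith)]
      nlinarith [mul_nonneg (neg_nonneg.mpr hneg.le) (sq_nonneg x)]
    have hquad : x ^ 2 / 2 ≤ x ^ 2 / (2 * (1 - lam)) := by
      gcongr
      linarith
    rw [← sub_eq_add_neg] at hlog
    linarith
  · -- `u ≤ sinh u` at `u = -log (1 - x)`.
    have hsinh := self_le_sinh_iff.mpr (neg_nonneg.mpr (log_nonpos hy.le (by linarith)))
    rw [sinh_neg, sinh_log hy] at hsinh
    calc -log (1 - x) ≤ -((1 - x - (1 - x)⁻¹) / 2) := hsinh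
      _ = x + x ^ 2 / (2 * (1 - x)) := by
        field_simp
        ring
      _ ≤ x + x ^ 2 / (2 * (1 - lam)) := by gcongr

theorem exists_subGamma_rate_eq {S L : ℝ} (hS : 0 < S) (hL : 0 ≤ L) :
    ∃ lam, 0 ≤ lam ∧ lam < 1 ∧
      lam * (√(2 * S * L) + L) - lam ^ 2 * (S / (2 * (1 - lam))) = L := by
  have hp := sqrt_pos.mpr hS
  have hq := sqrt_nonneg (2 * L)
  have hpS : √S ^ 2 = S := sq_sqrt hS.le
  have hqL : √(2 * L) ^ 2 = 2 * L := sq_sqrt (by positivity)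
  have hpq : √(2 * S * L) = √S * √(2 * L) := by
    rw [← sqrt_mul hS.le]
    ring_nf
  generalize √(2 * L) = q at *
  generalize √S = p at *
  have hone_sub : 1 - q / (p + q) = p / (p + q) := by
    field_simp
    ring
  refine ⟨q / (p + q), by positivity, (div_lt_one (by positivity)).mpr (by linarith), ?_⟩
  rw [hone_sub, hpq, ← hpS, show L = q ^ 2 / 2 by linarith]
  field_simp
  ring

theorem prod_one_sub_mul_rpow_neg_le_exp {ι : Type*} [Fintype ι] {α f : ι → ℝ}
    (hα : ∀ i, 0 ≤ α i) (hf : ∀ i, f i ≤ 1) {lam : ℝ} (h0 : 0 ≤ lam) (h1 : lam < 1) :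
    ∏ i, (1 - lam * f i) ^ (-α i) ≤
      exp (lam * ∑ i, α i * f i + lam ^ 2 * ((∑ i, α i * f i ^ 2) / (2 * (1 - lam)))) := by
  have hlamf : ∀ i, lam * f i ≤ lam := fun i => mul_le_of_le_one_right h0 (hf i)
  have hb : ∀ i, 0 < 1 - lam * f i := fun i => by linarith [hlamf i]
  calc ∏ i, (1 - lam * f i) ^ (-α i)
      ≤ ∏ i, exp (α i * (lam * f i + (lam * f i) ^ 2 / (2 * (1 - lam)))) := by
        refine Finset.prod_le_prod (fun i _ => rpow_nonneg (hb i).le _) fun i _ => ?_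
        rw [rpow_def_of_pos (hb i), exp_le_exp, mul_neg, ← neg_mul, mul_comm]
        exact mul_le_mul_of_nonneg_left (neg_log_one_sub_le (hlamf i) h0 h1) (hα i)
    _ = exp (lam * ∑ i, α i * f i + lam ^ 2 * ((∑ i, α i * f i ^ 2) / (2 * (1 - lam)))) := by
        rw [← exp_sum, Finset.sum_div, Finset.mul_sum, Finset.mul_sum, ← Finset.sum_add_distrib]
        exact congrArg exp (Finset.sum_congr rfl fun i _ => by ring)

variable {m : ℕ} {α f : Fin (m + 1) → ℝ}

theorem dirichlet_sum_mul_ge_le_exp (hα : ∀ i, 0 < α i) (hf : ∀ i, f i ≤ 1) {lam : ℝ}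
    (h0 : 0 ≤ lam) (h1 : lam < 1) (t : ℝ) :
    dirichlet m α {w | t ≤ ∑ i, w i * f i} ≤
      ENNReal.ofReal (exp (lam * (∑ i, α i * f i - (∑ i, α i) * t) +
        lam ^ 2 * ((∑ i, α i * f i ^ 2) / (2 * (1 - lam))))) := by
  have hb : ∀ i, 0 < 1 - lam * f i := fun i => by
    linarith [mul_le_of_le_one_right h0 (hf i)]
  have hevent : dirichlet m α {w | t ≤ ∑ i, w i * f i} ≤
      dirichlet m α {w | ∑ i, (1 - lam * f i) * w i ≤ exp (-(lam * t))} := by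
    refine measure_mono_ae ?_
    filter_upwards [ae_dirichlet_mem_stdSimplex] with w hw (ht : t ≤ ∑ i, w i * f i)
    calc ∑ i, (1 - lam * f i) * w i = ∑ i, w i - lam * ∑ i, w i * f i := by
          rw [Finset.mul_sum, ← Finset.sum_sub_distrib]
          exact Finset.sum_congr rfl fun i _ => by ring
      _ ≤ 1 - lam * t := by
          rw [hw.2]
          gcongr
      _ ≤ exp (-(lam * t)) := one_sub_le_exp_neg _
  refine (hevent.trans (dirichlet_sum_mul_le_le hα hb (exp_pos _))).trans
    (ENNReal.ofReal_le_ofReal ?_)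
  calc exp (-(lam * t)) ^ (∑ i, α i) * ∏ i, (1 - lam * f i) ^ (-α i)
      ≤ exp (-(lam * t) * ∑ i, α i) *
          exp (lam * ∑ i, α i * f i +
            lam ^ 2 * ((∑ i, α i * f i ^ 2) / (2 * (1 - lam)))) := by
        rw [← exp_mul]
        gcongr
        exact prod_one_sub_mul_rpow_neg_le_exp (fun i => (hα i).le) hf h0 h1
    _ = exp (lam * (∑ i, α i * f i - (∑ i, α i) * t) +
          lam ^ 2 * ((∑ i, α i * f i ^ 2) / (2 * (1 - lam)))) := by
        rw [← exp_add]
        ring_nf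

theorem dirichlet_bernstein (hα : ∀ i, 0 < α i) (hf : ∀ i, f i ≤ 1) {M S L : ℝ}
    (hM : ∑ i, α i * f i ≤ M) (hS : ∑ i, α i * f i ^ 2 ≤ S) (hSpos : 0 < S) (hL : 0 ≤ L) :
    dirichlet m α {w | (M + √(2 * S * L) + L) / ∑ i, α i ≤ ∑ i, w i * f i} ≤
      ENNReal.ofReal (exp (-L)) := by
  have hA : 0 < ∑ i, α i := Finset.sum_pos (fun i _ => hα i) Finset.univ_nonempty
  obtain ⟨lam, h0, h1, hrate⟩ := exists_subGamma_rate_eq hSpos hL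
  refine (dirichlet_sum_mul_ge_le_exp hα hf h0 h1 _).trans
    (ENNReal.ofReal_le_ofReal (exp_le_exp.mpr ?_))
  have : 0 < 1 - lam := sub_pos.mpr h1
  calc _ ≤ lam * (M - (M + √(2 * S * L) + L)) + lam ^ 2 * (S / (2 * (1 - lam))) := by
        rw [mul_div_cancel₀ _ hA.ne']
        gcongr
    _ = -L := by linarith

end SubGamma

section Empirical

variable {n : ℕ}

/-- The average `x̂ = n⁻¹ ∑ xᵢ` of a finite sample, equal to `0` for the empty sample. -/
def empiricalMean (x : Fin n → ℝ) : ℝ :=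
  (1 / n) * ∑ i, x i

/-- The variance `n⁻¹ ∑ xᵢ² - x̂²` of the empirical distribution of a finite sample, without
Bessel's correction. -/
def empiricalVariance (x : Fin n → ℝ) : ℝ :=
  (1 / n) * (∑ i, x i ^ 2) - empiricalMean x ^ 2

theorem sum_eq_natCast_mul_empiricalMean (x : Fin n → ℝ) : ∑ i, x i = n * empiricalMean x := by
  obtain rfl | hn := n.eq_zero_or_pos
  · simp
  · rw [empiricalMean]
    field_simp

theorem sum_sub_empiricalMean (x : Fin n → ℝ) : ∑ i, (x i - empiricalMean x) = 0 := by
  simp [sum_eq_natCast_mul_empiricalMean x]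

theorem sum_sub_empiricalMean_sq (x : Fin n → ℝ) :
    ∑ i, (x i - empiricalMean x) ^ 2 = n * empiricalVariance x := by
  obtain rfl | hn := n.eq_zero_or_pos
  · simp
  · simp_rw [sub_sq, Finset.sum_add_distrib, Finset.sum_sub_distrib, ← Finset.sum_mul,
      ← Finset.mul_sum, sum_eq_natCast_mul_empiricalMean x, empiricalVariance]
    simp only [Finset.sum_const, Finset.card_univ, Fintype.card_fin, nsmul_eq_mul]
    field_simp
    ring

theorem empiricalVariance_nonneg (x : Fin n → ℝ) : 0 ≤ empiricalVariance x := by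
  obtain rfl | hn := n.eq_zero_or_pos
  · simp [empiricalVariance, empiricalMean]
  · have hsq : 0 ≤ n * empiricalVariance x :=
      sum_sub_empiricalMean_sq x ▸ Finset.sum_nonneg fun i _ => sq_nonneg _
    exact nonneg_of_mul_nonneg_right hsq (by positivity)

theorem empiricalMean_mem_Icc {x : Fin n → ℝ} (hx : ∀ i, x i ∈ Icc (0 : ℝ) 1) :
    empiricalMean x ∈ Icc (0 : ℝ) 1 := by
  refine ⟨mul_nonneg (by positivity) (Finset.sum_nonneg fun i _ => (hx i).1), ?_⟩
  calc empiricalMean x ≤ (1 / n) * ∑ _i : Fin n, (1 : ℝ) := by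
        unfold empiricalMean
        gcongr with i
        exact (hx i).2
    _ ≤ 1 := by simpa using inv_mul_le_one

end Empirical

section EndpointWeights

/-- The parameter `(γ, 1, …, 1, γ)` of the Bayesian bootstrap with prior atoms of mass `γ` at the
first and last index. -/
def endpointWeights (n : ℕ) (γ : ℝ) : Fin (n + 2) → ℝ :=
  fun i => if i = 0 then γ else if i = Fin.last (n + 1) then γ else 1

variable {n : ℕ} {γ : ℝ}

theorem endpointWeights_pos (hγ : 0 < γ) (i : Fin (n + 2)) : 0 < endpointWeights n γ i := by
  unfold endpointWeights
  split_ifs <;> simp [hγ]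

theorem sum_endpointWeights_mul (h : Fin (n + 2) → ℝ) :
    ∑ i, endpointWeights n γ i * h i =
      γ * h 0 + ∑ i : Fin n, h i.castSucc.succ + γ * h (Fin.last (n + 1)) := by
  have hmiddle : ∀ i : Fin n, endpointWeights n γ i.castSucc.succ = 1 := fun i => by
    simp [endpointWeights, Fin.succ_ne_zero, ← Fin.succ_last, (Fin.castSucc_lt_last i).ne]
  rw [Fin.sum_univ_succ, Fin.sum_univ_castSucc]
  simp_rw [hmiddle]
  simp [endpointWeights, add_assoc]

theorem sum_endpointWeights : ∑ i, endpointWeights n γ i = n + 2 * γ := by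
  have h := sum_endpointWeights_mul (n := n) (γ := γ) fun _ => 1
  simp only [mul_one, Finset.sum_const, Finset.card_univ, Fintype.card_fin, nsmul_eq_mul] at h
  linarith

end EndpointWeights

theorem sqrt_add_le_sqrt_add_sqrt {a b : ℝ} (ha : 0 ≤ a) (hb : 0 ≤ b) : √(a + b) ≤ √a + √b := by
  refine sqrt_le_iff.mpr ⟨by positivity, ?_⟩
  rw [add_sq, sq_sqrt ha, sq_sqrt hb]
  linarith [mul_nonneg (sqrt_nonneg a) (sqrt_nonneg b)]

theorem bernstein_threshold_le {a γ V L : ℝ} (ha : 1 ≤ a) (hγ : 0 < γ) (hV : 0 ≤ V) (hL : 0 ≤ L) :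
    (2 * γ + √(2 * (a * V + 2 * γ) * L) + L) / (a + 2 * γ) ≤
      √(4 * V * L / (a + 2 * γ - 1)) + (4 * L + 5 * γ) / (a + 2 * γ - 1) := by
  have hN : 0 < a + 2 * γ - 1 := by linarith
  have hA : 0 < a + 2 * γ := by linarith
  have hsplit : √(2 * (a * V + 2 * γ) * L) ≤ √(2 * a * V * L) + (γ + L) :=
    calc √(2 * (a * V + 2 * γ) * L) = √(2 * a * V * L + 4 * γ * L) := by ring_nf
      _ ≤ √(2 * a * V * L) + √(4 * γ * L) :=
        sqrt_add_le_sqrt_add_sqrt (by positivity) (by positivity)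
      _ ≤ √(2 * a * V * L) + (γ + L) := by
        gcongr
        exact sqrt_le_iff.mpr ⟨by positivity, by nlinarith [sq_nonneg (γ - L)]⟩
  have hmain : √(2 * a * V * L) / (a + 2 * γ) ≤ √(4 * V * L / (a + 2 * γ - 1)) := by
    rw [← sqrt_sq hA.le, ← sqrt_div' _ (sq_nonneg _), sqrt_sq hA.le]
    refine sqrt_le_sqrt ?_
    rw [div_le_div_iff₀ (by positivity) hN]
    have hcoef : 2 * a * (a + 2 * γ - 1) ≤ 4 * (a + 2 * γ) ^ 2 := by nlinarith
    nlinarith [mul_le_mul_of_nonneg_left hcoef (mul_nonneg hV hL)]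
  calc (2 * γ + √(2 * (a * V + 2 * γ) * L) + L) / (a + 2 * γ)
      ≤ (2 * γ + (√(2 * a * V * L) + (γ + L)) + L) / (a + 2 * γ) := by gcongr
    _ = √(2 * a * V * L) / (a + 2 * γ) + (2 * L + 3 * γ) / (a + 2 * γ) := by ring
    _ ≤ √(4 * V * L / (a + 2 * γ - 1)) + (4 * L + 5 * γ) / (a + 2 * γ - 1) := by
        gcongr <;> linarith

theorem dirichlet_process_bernstein_general {n : ℕ} (hn : 1 ≤ n) {γ : ℝ} (hγ : 0 < γ)
    {g : Fin (n + 2) → ℝ} (hg : ∀ i, g i ∈ Icc (0 : ℝ) 1) {L : ℝ} (hL : 0 ≤ L) :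
    dirichlet (n + 1) (endpointWeights n γ)
        {w | √(4 * empiricalVariance (fun i : Fin n => g i.castSucc.succ) * L / (n + 2 * γ - 1)) +
              (4 * L + 5 * γ) / (n + 2 * γ - 1) ≤
            (∑ i, w i * g i) - empiricalMean fun i : Fin n => g i.castSucc.succ} ≤
      ENNReal.ofReal (exp (-L)) := by
  set x : Fin n → ℝ := fun i => g i.castSucc.succ
  set c := empiricalMean x
  set V := empiricalVariance x
  have hc : c ∈ Icc (0 : ℝ) 1 := empiricalMean_mem_Icc fun i => hg _
  have hV : 0 ≤ V := empiricalVariance_nonneg x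
  have hle : ∀ i, g i - c ≤ 1 := fun i => by linarith [(hg i).2, hc.1]
  have hsq : ∀ i, (g i - c) ^ 2 ≤ 1 := fun i =>
    (sq_le_one_iff_abs_le_one _).mpr (abs_le.mpr ⟨by linarith [(hg i).1, hc.2], hle i⟩)
  have hM : ∑ i, endpointWeights n γ i * (g i - c) ≤ 2 * γ := by
    rw [sum_endpointWeights_mul, sum_sub_empiricalMean x]
    nlinarith [hle 0, hle (Fin.last (n + 1))]
  have hS : ∑ i, endpointWeights n γ i * (g i - c) ^ 2 ≤ n * V + 2 * γ := by
    rw [sum_endpointWeights_mul fun i => (g i - c) ^ 2, sum_sub_empiricalMean_sq x]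
    nlinarith [hsq 0, hsq (Fin.last (n + 1))]
  refine le_trans (measure_mono_ae ?_) (dirichlet_bernstein (endpointWeights_pos hγ) hle hM hS
    (by positivity) hL)
  filter_upwards [ae_dirichlet_mem_stdSimplex] with w hw hthreshold
  have hcenter : ∑ i, w i * (g i - c) = (∑ i, w i * g i) - c := by
    simp_rw [mul_sub, Finset.sum_sub_distrib, ← Finset.sum_mul, hw.2, one_mul]
  change _ ≤ ∑ i, w i * (g i - c)
  rw [hcenter, sum_endpointWeights]
  exact (bernstein_threshold_le (by exact_mod_cast hn) hγ hV hL).trans hthreshold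

/-- **Bernstein-type inequality for the Dirichlet process posterior mean**
(conditional form, via Bayesian bootstrap weights `w ∼ Dir(γ, 1, …, 1, γ)`). -/
theorem dirichlet_process_bernstein
    (n : ℕ) (hn : 1 ≤ n) (ε γ : ℝ) (hε : ε ∈ Set.Ioo (0 : ℝ) 1)
    (hγ : c0 / ε ^ 2 + 1 ≤ γ)
    (g : Fin (n + 2) → ℝ) (hg : ∀ i, g i ∈ Set.Icc (0 : ℝ) 1)
    (hg0 : g 0 = 0) (hgl : g (Fin.last (n + 1)) = 1)
    (δ : ℝ) (hδ : δ ∈ Set.Ioo (0 : ℝ) 1) :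
    dirichlet (n + 1) (fun i => if i = 0 then γ else if i = Fin.last (n + 1) then γ else 1)
        {w | Real.sqrt (4 * ((1 / n) * (∑ i : Fin n, g i.castSucc.succ ^ 2)
                  - ((1 / n) * ∑ i : Fin n, g i.castSucc.succ) ^ 2)
                * Real.log ((1 + ε) / δ) / (n + 2 * γ - 1))
              + (4 * Real.log ((1 + ε) / δ) + 5 * γ) / (n + 2 * γ - 1)
              ≤ (∑ i, w i * g i) - (1 / n) * ∑ i : Fin n, g i.castSucc.succ}
      ≤ ENNReal.ofReal δ := by
  have hγpos : 0 < γ := lt_of_lt_of_le (by unfold c0; positivity) hγ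
  have hL : 0 ≤ log ((1 + ε) / δ) :=
    log_nonneg ((one_le_div hδ.1).mpr (by linarith [hε.1, hδ.2]))
  have hexp : exp (-log ((1 + ε) / δ)) ≤ δ := by
    rw [← log_inv, inv_div, exp_log (div_pos hδ.1 (by linarith [hε.1]))]
    exact div_le_self hδ.1.le (by linarith [hε.1])
  exact (dirichlet_process_bernstein_general hn hγpos hg hL).trans (ENNReal.ofReal_le_ofReal hexp)

end
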